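/- (Key lemma in the proof of Theorem 3, (i)⇒(vi)) Assume Ǎ is invertible. If there exist an index k ∈ {1,…,K}, a value t ∈ [−p̂_k, p̂_k], a sign vector ε with ε_i ∈ {−1,1} for all i ≠ k, a real number λ with |λ| ≥ 1, and a nonzero vector x ∈ ℝⁿ such that (t·Ǎ⁻¹A_k + ∑_{i≠k} ε_i p̂_i Ǎ⁻¹A_i) x = λ x, then the interval parametric matrix {A(p) : p ∈ P} is singular, i.e., there exists p ∈ P such that A(p) is not invertible. -/

import Mathlib

open Finset Matrix

/-!
Let `M` be the midpoint matrix and `B = ∑ i, d i • A i` a perturbation with `|d i| ≤ ph i`. The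
eigenvector equation `M⁻¹ B x = l x` says `(M - l⁻¹ B) x = 0`, and `M - l⁻¹ B` is the member of
the family at `p = pc - l⁻¹ d`, which lies in the box because `|l⁻¹| ≤ 1`.
-/

section Update

variable {ι R : Type*} [DecidableEq ι]

theorem sum_update_smul {E : Type*} [Fintype ι] [AddCommMonoid E] [SMul R E]
    (d : ι → R) (k : ι) (t : R) (f : ι → E) :
    ∑ i, Function.update d k t i • f i = t • f k + ∑ i ∈ univ.erase k, d i • f i := by
  rw [← add_sum_erase _ _ (mem_univ k), Function.update_self]
  congr 1
  exact sum_congr rfl fun i hi ↦ by rw [Function.update_of_ne (ne_of_mem_erase hi)]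

theorem abs_update_mul_le [Ring R] [LinearOrder R] [IsOrderedRing R]
    {r ε : ι → R} {k : ι} {t : R} (hr : ∀ i, i ≠ k → 0 ≤ r i) (ht : |t| ≤ r k)
    (hε : ∀ i, i ≠ k → |ε i| ≤ 1) (i : ι) :
    |Function.update (fun j ↦ ε j * r j) k t i| ≤ r i := by
  refine (Function.forall_update_iff _ fun j s ↦ |s| ≤ r j).2 ⟨ht, fun j hj ↦ ?_⟩ i
  calc |ε j * r j| = |ε j| * r j := by rw [abs_mul, abs_of_nonneg (hr j hj)]
    _ ≤ r j := mul_le_of_le_one_left (hr j hj) (hε j hj)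

end Update

section ParametricMatrix

variable {F m n ι : Type*} [Fintype ι]

/-- The member `A(p)` of the affine parametric family of matrices with constant term `A₀` and
coefficients `A`; letting `p` range over a box gives the interval parametric matrix. -/
def parametricMatrix [Semiring F] (A₀ : Matrix m n F) (A : ι → Matrix m n F) (p : ι → F) :
    Matrix m n F :=
  A₀ + ∑ i, p i • A i

theorem parametricMatrix_sub_smul [Ring F] (A₀ : Matrix m n F) (A : ι → Matrix m n F)
    (p d : ι → F) (c : F) :
    parametricMatrix A₀ A (p - c • d) = parametricMatrix A₀ A p - c • ∑ i, d i • A i := by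
  simp only [parametricMatrix, Pi.sub_apply, Pi.smul_apply, sub_smul, smul_assoc,
    sum_sub_distrib, smul_sum, add_sub_assoc]

variable [Fintype m] [DecidableEq m]

theorem not_isUnit_sub_inv_smul_of_mulVec_eq_smul [Field F] {M B : Matrix m m F} (hM : IsUnit M)
    {l : F} (hl : l ≠ 0) {x : m → F} (hx : x ≠ 0) (heig : (M⁻¹ * B) *ᵥ x = l • x) :
    ¬ IsUnit (M - l⁻¹ • B) := by
  have hBx : B *ᵥ x = l • (M *ᵥ x) := by
    calc B *ᵥ x = M *ᵥ ((M⁻¹ * B) *ᵥ x) := by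
          rw [mulVec_mulVec, mul_nonsing_inv_cancel_left _ _ ((isUnit_iff_isUnit_det M).1 hM)]
      _ = l • (M *ᵥ x) := by rw [heig, mulVec_smul]
  have hker : (M - l⁻¹ • B) *ᵥ x = 0 := by
    rw [sub_mulVec, smul_mulVec, hBx, inv_smul_smul₀ hl, sub_self]
  intro hu
  exact hx (mulVec_injective_of_isUnit hu (hker.trans (mulVec_zero _).symm))

theorem singular_of_real_eigenvalue_ge_one_general
    [Field F] [LinearOrder F] [IsStrictOrderedRing F]
    {A₀ : Matrix m m F} {A : ι → Matrix m m F} {pc ph d : ι → F}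
    (hAc : IsUnit (parametricMatrix A₀ A pc)) (hd : ∀ i, |d i| ≤ ph i)
    {l : F} (hl : 1 ≤ |l|) {x : m → F} (hx : x ≠ 0)
    (heig : (∑ i, d i • ((parametricMatrix A₀ A pc)⁻¹ * A i)) *ᵥ x = l • x) :
    ∃ p : ι → F, (∀ j, |p j - pc j| ≤ ph j) ∧ ¬ IsUnit (parametricMatrix A₀ A p) := by
  have hl₀ : l ≠ 0 := abs_pos.1 (zero_lt_one.trans_le hl)
  refine ⟨pc - l⁻¹ • d, fun j ↦ ?_, ?_⟩
  · calc |(pc - l⁻¹ • d) j - pc j| = |l|⁻¹ * |d j| := by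
          rw [Pi.sub_apply, sub_sub_cancel_left, abs_neg, Pi.smul_apply, smul_eq_mul, abs_mul,
            abs_inv]
      _ ≤ |d j| := mul_le_of_le_one_left (abs_nonneg _) (inv_le_one_of_one_le₀ hl)
      _ ≤ ph j := hd j
  · rw [parametricMatrix_sub_smul]
    refine not_isUnit_sub_inv_smul_of_mulVec_eq_smul hAc hl₀ hx ?_
    simpa only [Matrix.mul_sum, Matrix.mul_smul] using heig

end ParametricMatrix

/-- Key lemma in the proof of Theorem 3, (i)⇒(vi): if `Ǎ` is invertible and
`B := t • Ǎ⁻¹ * A k + ∑_{i ≠ k} (ε i * p̂ i) • Ǎ⁻¹ * A i` has a real eigenvalue `l`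
with `|l| ≥ 1` (for some `k`, `t ∈ [−p̂ k, p̂ k]` and sign vector `ε`), then the
interval parametric matrix `{A(p) : p ∈ P}` is singular. -/
theorem singular_of_real_eigenvalue_ge_one
    (n K : ℕ) (hn : 1 ≤ n) (hK : 1 ≤ K)
    (A₀ : Matrix (Fin n) (Fin n) ℝ) (A : Fin K → Matrix (Fin n) (Fin n) ℝ)
    (pc ph : Fin K → ℝ) (hph : ∀ k, 0 < ph k)
    (hAc : IsUnit (A₀ + ∑ i, pc i • A i))
    (k : Fin K) (t : ℝ) (ht : t ∈ Set.Icc (-(ph k)) (ph k))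
    (ε : Fin K → ℝ) (hε : ∀ i, i ≠ k → ε i = 1 ∨ ε i = -1)
    (l : ℝ) (hl : 1 ≤ |l|) (x : Fin n → ℝ) (hx : x ≠ 0)
    (heig : (t • ((A₀ + ∑ i, pc i • A i)⁻¹ * A k) +
        ∑ i ∈ Finset.univ.erase k,
          (ε i * ph i) • ((A₀ + ∑ j, pc j • A j)⁻¹ * A i)) *ᵥ x = l • x) :
    ∃ p : Fin K → ℝ, (∀ j, |p j - pc j| ≤ ph j) ∧
      ¬ IsUnit (A₀ + ∑ j, p j • A j) := by
  have hd := abs_update_mul_le (fun i _ ↦ (hph i).le) (abs_le.2 ht)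
    fun i hi ↦ ((abs_eq zero_le_one).2 (hε i hi)).le
  exact singular_of_real_eigenvalue_ge_one_general hAc hd hl hx (by rwa [sum_update_smul])
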